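/- Fix q ∈ (0,1). Then for all x, y ∈ I one has dim_q(xy) ≤ dim_q(x)·dim_q(y) (where xy is the concatenation), and there exists a constant c > 0, depending only on q, such that dim_q(xy) ≥ c·dim_q(x)·dim_q(y) for all x, y ∈ I. -/

import Mathlib

open scoped ENNReal

namespace Paper

/-- Words in the two letters `α, β`: the free monoid on two generators, as `List Bool`.
The head of the list is the leftmost letter. -/
abbrev Word := List Bool

/-- Length of the longest common prefix of two lists. -/
def lcpLen : List Bool → List Bool → ℕ
  | a :: s, b :: t => if a = b then lcpLen s t + 1 else 0
  | _, _ => 0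

/-- Length of the longest common suffix of two words. -/
def lcsLen (s t : Word) : ℕ := lcpLen s.reverse t.reverse

/-- The tree metric on `Word`: `d(s,t) = (|s| - k) + (|t| - k)`, `k` the length of the
longest common suffix. -/
def treeDist (s t : Word) : ℕ := (s.length - lcsLen s t) + (t.length - lcsLen s t)

/-- The branch `Δ_x = {u x : u ∈ I}` of words having `x` as a suffix. -/
def Delta (x : Word) : Set Word := {s | x <:+ s}

/-- The geodesic segment `[s,t] = {v : d(s,v) + d(v,t) = d(s,t)}`. -/
def geodesic (s t : Word) : Set Word := {v | treeDist s v + treeDist v t = treeDist s t}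

/-- Paths of `n` steps from `s` to `t` staying in `Ω`. -/
def pathSet {X : Type*} (Ω : Set X) (n : ℕ) (s t : X) : Set (Fin (n + 1) → X) :=
  {σ | σ 0 = s ∧ σ (Fin.last n) = t ∧ ∀ i, σ i ∈ Ω}

/-- The weight `∏ a(s_i, s_{i+1})` of a path, as an extended nonnegative real. -/
noncomputable def weightE {X : Type*} (a : X → X → ℝ) (n : ℕ) (σ : Fin (n + 1) → X) : ℝ≥0∞ :=
  ∏ i : Fin n, ENNReal.ofReal (a (σ i.castSucc) (σ i.succ))

/-- The `n`-step kernel `a⁽ⁿ⁾(s,t)` of the kernel `a` on `Ω`, with values in `[0,∞]`. -/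
noncomputable def nStepE {X : Type*} (Ω : Set X) (a : X → X → ℝ) (n : ℕ) (s t : X) : ℝ≥0∞ :=
  ∑' σ : pathSet Ω n s t, weightE a n σ.1

/-- The Green kernel `G_a(s,t) = Σ_n a⁽ⁿ⁾(s,t)` of `a` on `Ω`, with values in `[0,∞]`. -/
noncomputable def greenE {X : Type*} (Ω : Set X) (a : X → X → ℝ) (s t : X) : ℝ≥0∞ :=
  ∑' n : ℕ, nStepE Ω a n s t

/-- The weight of a path, real version (for signed kernels). -/
noncomputable def weightR {X : Type*} (a : X → X → ℝ) (n : ℕ) (σ : Fin (n + 1) → X) : ℝ :=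
  ∏ i : Fin n, a (σ i.castSucc) (σ i.succ)

/-- The `n`-step kernel of a signed kernel `a` on `Ω`. -/
noncomputable def nStepR {X : Type*} (Ω : Set X) (a : X → X → ℝ) (n : ℕ) (s t : X) : ℝ :=
  ∑' σ : pathSet Ω n s t, weightR a n σ.1

/-- The Green kernel of a signed kernel `a` on `Ω`, as a real number. -/
noncomputable def greenR {X : Type*} (Ω : Set X) (a : X → X → ℝ) (s t : X) : ℝ :=
  ∑' n : ℕ, nStepR Ω a n s t

/-- The Green kernel of `|a|`: finiteness of this expresses absolute convergence of the
series defining the Green kernel of `a`. -/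
noncomputable def greenAbs {X : Type*} (Ω : Set X) (a : X → X → ℝ) (s t : X) : ℝ≥0∞ :=
  greenE Ω (fun u v => |a u v|) s t

/-- (H1): finite range `S`. -/
def H1 (p : Word → Word → ℝ) (S : ℕ) : Prop := ∀ s t, S < treeDist s t → p s t = 0

/-- (H2): nonzero transition probabilities are bounded below by `δ₀`. -/
def H2 (p : Word → Word → ℝ) (δ₀ : ℝ) : Prop := ∀ s t, 0 < p s t → δ₀ ≤ p s t

/-- (H3): uniform irreducibility. -/
def H3 (p : Word → Word → ℝ) (δ₀ : ℝ) (K : ℕ) : Prop :=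
  ∀ s t, treeDist s t = 1 → ∃ k ≤ K, ∃ u : ℕ → Word, u 0 = s ∧ u k = t ∧
    ∀ i < k, ∀ x : Word, δ₀ ≤ p (u i ++ x) (u (i + 1) ++ x)

/-- The operator `(Pf)(s) = Σ_t p(s,t) f(t)` extends to a bounded operator of norm at most
`lam` on `ℓ²(X, m)`, expressed via the associated bilinear form on finitely supported
functions. -/
def opNormBound {X : Type*} (m : X → ℝ) (p : X → X → ℝ) (lam : ℝ) : Prop :=
  ∀ f g : X → ℝ, (Function.support f).Finite → (Function.support g).Finite →
    |∑' s, m s * g s * ∑' t, p s t * f t| ≤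
      lam * Real.sqrt (∑' x, m x * f x ^ 2) * Real.sqrt (∑' x, m x * g x ^ 2)

/-- (H4): there is a weight `m` for which `P` is bounded of norm at most `lam` on `ℓ²(I,m)`. -/
def H4 (p : Word → Word → ℝ) (m : Word → ℝ) (lam : ℝ) : Prop :=
  (∀ x, 0 < m x) ∧ opNormBound m p lam

/-- Substochasticity: `Σ_t p(s,t) ≤ 1` for every `s`. -/
def Substochastic (p : Word → Word → ℝ) : Prop :=
  ∀ s, (∑' t, ENNReal.ofReal (p s t)) ≤ 1

/-- `b` is a `q`-perturbation of `p` on `Δ_z` (with constant `C`). -/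
def Perturb (p b : Word → Word → ℝ) (z : Word) (q C : ℝ) : Prop :=
  ∀ s t, s ∈ Delta z → t ∈ Delta z →
    |b s t| ≤ p s t ∧ |b s t - p s t| ≤ C * q ^ s.length

/-- The word `ω|k = ω(k-1) ω(k-2) ⋯ ω(0)` of length `k` determined by an end `ω`. -/
def endWord (ω : ℕ → Bool) (k : ℕ) : Word := (List.range k).reverse.map ω

/-- The last-entrance kernel `M_p(s,u)`: sum over paths from `s` to `u` of length at least
one whose second-to-last point lies outside `Δ_x`. -/
noncomputable def lastEnter (p : Word → Word → ℝ) (x s u : Word) : ℝ≥0∞ :=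
  ∑' m : ℕ, ∑' σ : {σ : Fin (m + 2) → Word //
      σ ∈ pathSet Set.univ (m + 1) s u ∧ σ ((Fin.last m).castSucc) ∉ Delta x},
    weightE p (m + 1) σ.1

/-- The quantum integer `[n]_q = (q⁻ⁿ - qⁿ)/(q⁻¹ - q)`. -/
noncomputable def qInt (q : ℝ) (n : ℕ) : ℝ := (q ^ (-(n : ℤ)) - q ^ (n : ℤ)) / (q⁻¹ - q)

/-- The lengths of the blocks in the canonical factorization of a word into maximal
alternating subwords. -/
def blockLens : Word → List ℕ
  | [] => []
  | [_] => [1]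
  | a :: b :: rest =>
    match blockLens (b :: rest) with
    | [] => [1]
    | k :: ks => if a = b then 1 :: (k :: ks) else (k + 1) :: ks

/-- The quantum dimension `dim_q(x) = Π_i [|x_i| + 1]_q` over the blocks of `x`. -/
noncomputable def dimq (q : ℝ) (x : Word) : ℝ := ((blockLens x).map fun L => qInt q (L + 1)).prod

/-- The classical dimension `dim(x) = Π_i (|x_i| + 1)` over the blocks of `x`. -/
noncomputable def dimn (x : Word) : ℝ := ((blockLens x).map fun L => (L + 1 : ℝ)).prod

/-- The involution `x ↦ x̄`: reverse the word and exchange the two letters. -/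
def bar (x : Word) : Word := (x.map fun a => !a).reverse

/-- The fusion multiplicity `mᵗ_{r,s}`: the number of words `z` such that `r = r₀ z`,
`s = z̄ s₀`, `t = r₀ s₀` for some `r₀, s₀`. -/
noncomputable def fuse (r s t : Word) : ℕ :=
  {z : Word | ∃ r₀ s₀ : Word, r = r₀ ++ z ∧ s = bar z ++ s₀ ∧ t = r₀ ++ s₀}.ncard

/-- A finitely supported probability measure on `Word`. -/
def IsProbMeasure (μ : Word → ℝ) : Prop :=
  (∀ x, 0 ≤ μ x) ∧ (Function.support μ).Finite ∧ ∑' x, μ x = 1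

/-- The transition kernel `p_μ(s,t) = Σ_r μ(r) mᵗ_{r,s} dim_q(t)/(dim_q(r) dim_q(s))`. -/
noncomputable def pMu (q : ℝ) (μ : Word → ℝ) (s t : Word) : ℝ :=
  ∑' r, μ r * (fuse r s t : ℝ) * dimq q t / (dimq q r * dimq q s)

/-- The `q`-binomial coefficient. -/
noncomputable def qbinom (q : ℝ) (n k : ℕ) : ℝ :=
  q ^ (-((k * (n - k) : ℕ) : ℤ)) *
    ∏ i ∈ Finset.range k, (1 - q ^ (2 * (n - i))) / (1 - q ^ (2 * (k - i)))

/-!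
The quantum dimension obeys the fusion rule
`dim(xa) dim(by) = dim(xaby) + dim(x) dim(y)` if `a ≠ b`, with the last term absent if `a = b`.
For empty `x` it is the recurrence `dim(aby) = [2] dim(by) - dim(y)`, respectively
`dim(aby) = [2] dim(by)`, which comes from comparing blocks; it extends to all `x` because both
sides satisfy this recurrence in `x`. Positivity gives the upper bound. As `[2] = q⁻¹ + q`, the
recurrence also shows by induction that `dim(x) ≤ q dim(ax)`, and `dim(x) ≤ q dim(xa)` by
reversal. So the last term of the fusion rule is at most `q² dim(xa) dim(by)`, and `c = 1 - q²`
works when `q < 1`; the case `q > 1` is the same up to the symmetry `q ↔ q⁻¹`.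
-/

section QuantumInteger

variable {q : ℝ}

theorem qInt_zero (q : ℝ) : qInt q 0 = 0 := by
  simp [qInt]

theorem qInt_inv (q : ℝ) (n : ℕ) : qInt q⁻¹ n = qInt q n := by
  rw [qInt, qInt, inv_inv, inv_zpow', inv_zpow', neg_neg, ← neg_sub (q ^ (-(n : ℤ))),
    ← neg_sub q⁻¹, neg_div_neg_eq]

theorem qInt_succ (hq₀ : 0 < q) (hq₁ : q ≠ 1) (n : ℕ) :
    qInt q (n + 1) = q⁻¹ * qInt q n + q ^ n := by
  have hsq : 1 - q ^ 2 ≠ 0 :=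
    sub_ne_zero.2 fun h => hq₁ ((pow_eq_one_iff_of_nonneg hq₀.le two_ne_zero).1 h.symm)
  have hden : q⁻¹ - q = (1 - q ^ 2) / q := by field_simp
  simp only [qInt, hden, zpow_neg, zpow_natCast]
  field_simp
  ring

theorem qInt_one (hq₀ : 0 < q) (hq₁ : q ≠ 1) : qInt q 1 = 1 := by
  simpa [qInt_zero] using qInt_succ hq₀ hq₁ 0

theorem qInt_two (hq₀ : 0 < q) (hq₁ : q ≠ 1) : qInt q 2 = q⁻¹ + q := by
  simpa [qInt_one hq₀ hq₁] using qInt_succ hq₀ hq₁ 1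

theorem qInt_add_two (hq₀ : 0 < q) (hq₁ : q ≠ 1) (n : ℕ) :
    qInt q (n + 2) = qInt q 2 * qInt q (n + 1) - qInt q n := by
  rw [qInt_succ hq₀ hq₁ (n + 1), qInt_two hq₀ hq₁, qInt_succ hq₀ hq₁ n]
  field_simp
  ring

theorem qInt_succ_pos (hq₀ : 0 < q) (hq₁ : q ≠ 1) (n : ℕ) : 0 < qInt q (n + 1) := by
  induction n with
  | zero => simp [qInt_one hq₀ hq₁]
  | succ n ih =>
    rw [qInt_succ hq₀ hq₁]
    positivity

end QuantumInteger

theorem exists_blockLens_cons (a : Bool) (x : Word) : ∃ k ks, blockLens (a :: x) = k :: ks := by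
  cases x with
  | nil => exact ⟨1, [], rfl⟩
  | cons b x =>
    rw [blockLens]
    split
    · exact ⟨_, _, rfl⟩
    · split_ifs <;> exact ⟨_, _, rfl⟩

theorem blockLens_cons_self (a : Bool) (x : Word) :
    blockLens (a :: a :: x) = 1 :: blockLens (a :: x) := by
  obtain ⟨k, ks, hk⟩ := exists_blockLens_cons a x
  simp only [blockLens, hk, if_true]

theorem blockLens_cons_of_ne {a b : Bool} (hab : a ≠ b) {x : Word} {k : ℕ} {ks : List ℕ}
    (hk : blockLens (b :: x) = k :: ks) : blockLens (a :: b :: x) = (k + 1) :: ks := by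
  simp only [blockLens, hk, if_neg hab]

section QuantumDimension

variable {q : ℝ}

theorem dimq_inv (q : ℝ) (x : Word) : dimq q⁻¹ x = dimq q x := by
  simp only [dimq, qInt_inv]

theorem dimq_nil (q : ℝ) : dimq q [] = 1 := rfl

theorem dimq_singleton (q : ℝ) (a : Bool) : dimq q [a] = qInt q 2 := by
  simp [dimq, blockLens]

theorem dimq_pos (hq₀ : 0 < q) (hq₁ : q ≠ 1) (x : Word) : 0 < dimq q x := by
  refine List.prod_pos ?_
  simp only [List.forall_mem_map]
  exact fun L _ => qInt_succ_pos hq₀ hq₁ L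

theorem dimq_cons_self (q : ℝ) (a : Bool) (x : Word) :
    dimq q (a :: a :: x) = qInt q 2 * dimq q (a :: x) := by
  simp only [dimq, blockLens_cons_self, List.map_cons, List.prod_cons]

theorem dimq_cons_of_ne (hq₀ : 0 < q) (hq₁ : q ≠ 1) {a b : Bool} (hab : a ≠ b) (x : Word) :
    dimq q (a :: b :: x) = qInt q 2 * dimq q (b :: x) - dimq q x := by
  have h₃ : qInt q 3 = qInt q 2 * qInt q 2 - 1 := by
    rw [qInt_add_two hq₀ hq₁ 1, qInt_one hq₀ hq₁]
  rcases x with _ | ⟨c, x⟩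
  · simp [dimq, blockLens, hab, h₃]
  obtain ⟨k, ks, hk⟩ := exists_blockLens_cons c x
  obtain rfl | hbc := eq_or_ne b c
  · have hbb : blockLens (b :: b :: x) = 1 :: k :: ks := by rw [blockLens_cons_self, hk]
    simp only [dimq, blockLens_cons_of_ne hab hbb, hbb, hk, List.map_cons, List.prod_cons,
      Nat.reduceAdd, h₃]
    ring
  · have hbc' := blockLens_cons_of_ne hbc hk
    simp only [dimq, blockLens_cons_of_ne hab hbc', hbc', hk, List.map_cons, List.prod_cons,
      qInt_add_two hq₀ hq₁ (k + 1)]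
    ring

theorem dimq_cons_cons (hq₀ : 0 < q) (hq₁ : q ≠ 1) (a b : Bool) (x : Word) :
    dimq q (a :: b :: x) =
      qInt q 2 * dimq q (b :: x) - (if a = b then 0 else 1) * dimq q x := by
  split_ifs with hab
  · rw [hab, dimq_cons_self, zero_mul, sub_zero]
  · rw [dimq_cons_of_ne hq₀ hq₁ hab, one_mul]

theorem dimq_append_singleton_mul_dimq_cons (hq₀ : 0 < q) (hq₁ : q ≠ 1) (a b : Bool) (y : Word) :
    ∀ x : Word, dimq q (x ++ [a]) * dimq q (b :: y) =
      dimq q (x ++ a :: b :: y) + (if a = b then 0 else 1) * (dimq q x * dimq q y)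
  | [] => by
    simp only [List.nil_append, dimq_singleton, dimq_nil, dimq_cons_cons hq₀ hq₁ a b y]
    ring
  | [c] => by
    simp only [List.cons_append, List.nil_append, dimq_cons_cons hq₀ hq₁, dimq_singleton, dimq_nil]
    ring
  | c :: d :: x => by
    have ih₁ := dimq_append_singleton_mul_dimq_cons hq₀ hq₁ a b y (d :: x)
    have ih₂ := dimq_append_singleton_mul_dimq_cons hq₀ hq₁ a b y x
    simp only [List.cons_append] at ih₁ ⊢
    simp only [dimq_cons_cons hq₀ hq₁ c d]
    linear_combination qInt q 2 * ih₁ - (if c = d then 0 else 1) * ih₂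

theorem dimq_reverse (hq₀ : 0 < q) (hq₁ : q ≠ 1) : ∀ x : Word, dimq q x.reverse = dimq q x
  | [] => rfl
  | [_] => rfl
  | a :: b :: x => by
    have fusion := dimq_append_singleton_mul_dimq_cons hq₀ hq₁ b a [] x.reverse
    have ih := dimq_reverse hq₀ hq₁ (b :: x)
    simp only [List.reverse_cons, List.append_assoc, List.cons_append, List.nil_append,
      dimq_singleton, dimq_nil, dimq_reverse hq₀ hq₁ x, mul_one, eq_comm (a := b)] at fusion ih ⊢
    rw [dimq_cons_cons hq₀ hq₁, ← ih]
    linear_combination -fusion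

theorem dimq_le_mul_dimq_cons (hq₀ : 0 < q) (hq₁ : q ≠ 1) (a : Bool) (x : Word) :
    dimq q x ≤ q * dimq q (a :: x) := by
  induction x generalizing a with
  | nil =>
    rw [dimq_nil, dimq_singleton, qInt_two hq₀ hq₁, mul_add, mul_inv_cancel₀ hq₀.ne']
    exact le_add_of_nonneg_right (mul_self_nonneg q)
  | cons b x ih =>
    have hpos := dimq_pos hq₀ hq₁ x
    have hdrop : (if a = b then 0 else 1) * dimq q x ≤ q * dimq q (b :: x) :=
      (mul_le_of_le_one_left hpos.le (by split_ifs <;> norm_num)).trans (ih b)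
    calc dimq q (b :: x) = q * (qInt q 2 * dimq q (b :: x) - q * dimq q (b :: x)) := by
          rw [qInt_two hq₀ hq₁]
          field_simp
          ring
      _ ≤ q * (qInt q 2 * dimq q (b :: x) - (if a = b then 0 else 1) * dimq q x) := by gcongr
      _ = q * dimq q (a :: b :: x) := by rw [dimq_cons_cons hq₀ hq₁]

theorem dimq_le_mul_dimq_append_singleton (hq₀ : 0 < q) (hq₁ : q ≠ 1) (x : Word) (a : Bool) :
    dimq q x ≤ q * dimq q (x ++ [a]) := by
  have h := dimq_le_mul_dimq_cons hq₀ hq₁ a x.reverse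
  rwa [dimq_reverse hq₀ hq₁, ← dimq_reverse hq₀ hq₁ (a :: x.reverse), List.reverse_cons,
    List.reverse_reverse] at h

theorem dimq_append_le (hq₀ : 0 < q) (hq₁ : q ≠ 1) (x y : Word) :
    dimq q (x ++ y) ≤ dimq q x * dimq q y := by
  obtain rfl | ⟨x, a, rfl⟩ := x.eq_nil_or_concat'
  · simp [dimq_nil]
  obtain _ | ⟨b, y⟩ := y
  · simp [dimq_nil]
  have hx := dimq_pos hq₀ hq₁ x
  have hy := dimq_pos hq₀ hq₁ y
  rw [dimq_append_singleton_mul_dimq_cons hq₀ hq₁, List.append_assoc, List.singleton_append]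
  exact le_add_of_nonneg_right (by positivity)

theorem le_dimq_append (hq₀ : 0 < q) (hq₁ : q ≠ 1) (x y : Word) :
    (1 - q ^ 2) * (dimq q x * dimq q y) ≤ dimq q (x ++ y) := by
  have hx := dimq_pos hq₀ hq₁ x
  have hy := dimq_pos hq₀ hq₁ y
  have hc : 1 - q ^ 2 ≤ 1 := sub_le_self 1 (sq_nonneg q)
  obtain rfl | ⟨x, a, rfl⟩ := x.eq_nil_or_concat'
  · simpa [dimq_nil] using mul_le_of_le_one_left hy.le hc
  obtain _ | ⟨b, y⟩ := y
  · simpa [dimq_nil] using mul_le_of_le_one_left hx.le hc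
  have fusion := dimq_append_singleton_mul_dimq_cons hq₀ hq₁ a b y x
  have hdrop : (if a = b then 0 else 1) * (dimq q x * dimq q y) ≤
      q ^ 2 * (dimq q (x ++ [a]) * dimq q (b :: y)) := by
    have hx' := dimq_pos hq₀ hq₁ x
    have hy' := dimq_pos hq₀ hq₁ y
    calc (if a = b then 0 else 1) * (dimq q x * dimq q y) ≤ dimq q x * dimq q y :=
          mul_le_of_le_one_left (by positivity) (by split_ifs <;> norm_num)
      _ ≤ q * dimq q (x ++ [a]) * (q * dimq q (b :: y)) := by
          gcongr
          · exact dimq_le_mul_dimq_append_singleton hq₀ hq₁ x a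
          · exact dimq_le_mul_dimq_cons hq₀ hq₁ b y
      _ = q ^ 2 * (dimq q (x ++ [a]) * dimq q (b :: y)) := by ring
  rw [List.append_assoc, List.singleton_append]
  linarith

end QuantumDimension

theorem dimq_concat_general (q : ℝ) (hq₀ : 0 < q) (hq₁ : q ≠ 1) :
    (∀ x y : Word, dimq q (x ++ y) ≤ dimq q x * dimq q y) ∧
    ∃ c > (0 : ℝ), ∀ x y : Word, c * (dimq q x * dimq q y) ≤ dimq q (x ++ y) := by
  refine ⟨dimq_append_le hq₀ hq₁, ?_⟩
  wlog hq : q < 1 generalizing q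
  · simpa only [dimq_inv] using this q⁻¹ (inv_pos.2 hq₀) (inv_ne_one.2 hq₁)
      (inv_lt_one_of_one_lt₀ (lt_of_le_of_ne (not_lt.1 hq) hq₁.symm))
  · exact ⟨1 - q ^ 2, sub_pos.2 (pow_lt_one₀ hq₀.le hq two_ne_zero), le_dimq_append hq₀ hq₁⟩

/-- Quasi-multiplicativity of `dim_q` under concatenation:
`dim_q(xy) ≤ dim_q(x) dim_q(y)` and `dim_q(xy) ≥ c dim_q(x) dim_q(y)` for a constant
`c > 0` depending only on `q`. -/
theorem dimq_concat (q : ℝ) (hq : q ∈ Set.Ioo (0 : ℝ) 1) :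
    (∀ x y : Word, dimq q (x ++ y) ≤ dimq q x * dimq q y) ∧
    ∃ c > (0 : ℝ), ∀ x y : Word, c * (dimq q x * dimq q y) ≤ dimq q (x ++ y) :=
  dimq_concat_general q hq.1 hq.2.ne

end Paper
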